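/- Let L : V → Ṽ be a symplectic linear map, E = L ∘ (L*L)^{-1/2}, and let (a_1, …, a_{2n}) be an orthonormal basis of V with a_{2k} = J a_{2k−1} and L*L a_i = λ_i² a_i, λ_i > 0, λ_{2k−1}λ_{2k} = 1. Set ã_i = E(a_i). Then: (a) (ã_1, …, ã_{2n}) is an orthonormal basis of Ṽ with ã_{2k} = J̃ ã_{2k−1} for k = 1, …, n; and (b) L a_i = λ_i ã_i for each i, i.e. L is diagonalized with respect to these bases with diagonal entries ordered in pairs whose product is 1. -/

import Mathlib

/-!
Each `a i` is an eigenvector of the positive square root `P` of `L*L`, with eigenvalue `lam i`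
(`apply_eq_smul_of_sq_eigen`). Hence `L (a i) = E (P (a i)) = lam i • E (a i)`, and orthonormality
of `E (a i)` follows from `⟪L (a i), L (a j)⟫ = ⟪L*L (a i), a j⟫ = lam i ^ 2 * ⟪a i, a j⟫`.
An orthonormal family of `2 * n = dim W` vectors spans `W`.

For the complex structure, write `b = a_{2k}`. Symplecticity gives
`⟪J' (L b), L (J b)⟫ = ⟪J b, J b⟫ = 1`, and since the two singular values multiply to `1`, this is
`⟪J' (E b), E (J b)⟫ = 1`. Two unit vectors with inner product `1` are equal.
-/

open scoped RealInnerProductSpace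

/-- If `P` is positive definite and `P² x = c² x` with `c > 0`, then `P x = c x`: the vector
`w = P x - c x` satisfies `P w = -c w`, which contradicts positivity unless `w = 0`. -/
lemma apply_eq_smul_of_sq_eigen {V : Type*} [NormedAddCommGroup V] [InnerProductSpace ℝ V]
    (P : V →ₗ[ℝ] V) (hPpos : ∀ v : V, v ≠ 0 → 0 < inner ℝ (P v) v)
    {x : V} {c : ℝ} (hc : 0 < c) (hx : P (P x) = c ^ 2 • x) : P x = c • x := by
  by_contra hne
  have hw : P x - c • x ≠ 0 := sub_ne_zero.mpr hne
  have hPw : P (P x - c • x) = (-c) • (P x - c • x) := by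
    rw [map_sub, map_smul, hx]
    module
  have h := hPpos _ hw
  rw [hPw, real_inner_smul_left] at h
  have h0 : 0 ≤ inner ℝ (P x - c • x) (P x - c • x) := real_inner_self_nonneg
  nlinarith

/-- If `(a_i)` is an orthonormal basis of `V` (0-indexed) with
`a_{2k+1} = J a_{2k}`, `L*L a_i = λ_i² a_i`, `λ_i > 0`, `λ_{2k} λ_{2k+1} = 1`, and
`E = L ∘ (L*L)^{-1/2}`, then `(ã_i) = (E a_i)` is an orthonormal basis of `W` with
`ã_{2k+1} = J̃ ã_{2k}`, and `L a_i = λ_i ã_i` for every `i`. -/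
theorem symplectic_diagonalization_image_basis {n : ℕ} {V W : Type*}
    [NormedAddCommGroup V] [InnerProductSpace ℝ V] [FiniteDimensional ℝ V]
    [NormedAddCommGroup W] [InnerProductSpace ℝ W] [FiniteDimensional ℝ W]
    (hV : Module.finrank ℝ V = 2 * n) (hW : Module.finrank ℝ W = 2 * n)
    (J : V →ₗ[ℝ] V) (J' : W →ₗ[ℝ] W)
    (hJ2 : ∀ v, J (J v) = -v) (hJorth : ∀ u v : V, ⟪J u, J v⟫ = ⟪u, v⟫)
    (hJ'2 : ∀ w, J' (J' w) = -w) (hJ'orth : ∀ u v : W, ⟪J' u, J' v⟫ = ⟪u, v⟫)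
    (L : V →ₗ[ℝ] W) (hLbij : Function.Bijective L)
    (hL : ∀ u v : V, ⟪J u, v⟫ = ⟪J' (L u), L v⟫)
    -- `P = (L*L)^{1/2}` and `E = L ∘ P⁻¹`
    (P : V →ₗ[ℝ] V)
    (hPsa : ∀ u v : V, ⟪P u, v⟫ = ⟪u, P v⟫)
    (hPpos : ∀ v : V, v ≠ 0 → 0 < ⟪P v, v⟫)
    (hPsq : P.comp P = (LinearMap.adjoint L).comp L)
    (E : V →ₗ[ℝ] W) (hE : ∀ v : V, E (P v) = L v)
    -- the orthonormal basis of `V` given by the singular value decomposition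
    (a : Fin (2 * n) → V) (lam : Fin (2 * n) → ℝ)
    (ha : Orthonormal ℝ a)
    (haspan : Submodule.span ℝ (Set.range a) = ⊤)
    (hlam : ∀ i, 0 < lam i)
    (haJ : ∀ k : Fin n, a ⟨2 * (k : ℕ) + 1, by have := k.isLt; omega⟩ =
      J (a ⟨2 * (k : ℕ), by have := k.isLt; omega⟩))
    (heig : ∀ i, (LinearMap.adjoint L) (L (a i)) = ((lam i) ^ 2) • a i)
    (hpair : ∀ k : Fin n, lam ⟨2 * (k : ℕ), by have := k.isLt; omega⟩ *
      lam ⟨2 * (k : ℕ) + 1, by have := k.isLt; omega⟩ = 1) :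
    Orthonormal ℝ (fun i => E (a i)) ∧
    Submodule.span ℝ (Set.range fun i => E (a i)) = ⊤ ∧
    (∀ k : Fin n, E (a ⟨2 * (k : ℕ) + 1, by have := k.isLt; omega⟩) =
      J' (E (a ⟨2 * (k : ℕ), by have := k.isLt; omega⟩))) ∧
    (∀ i, L (a i) = lam i • E (a i)) := by
  have hLE : ∀ i, L (a i) = lam i • E (a i) := by
    intro i
    have hPP : P (P (a i)) = lam i ^ 2 • a i := by
      rw [← heig i]
      exact LinearMap.congr_fun hPsq (a i)
    rw [← hE, apply_eq_smul_of_sq_eigen P hPpos (hlam i) hPP, map_smul]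
  have hinner : ∀ i j, lam i * (lam j * ⟪E (a i), E (a j)⟫) = lam i ^ 2 * ⟪a i, a j⟫ := by
    intro i j
    have h := LinearMap.adjoint_inner_left L (a j) (L (a i))
    rw [heig, real_inner_smul_left, hLE i, hLE j, real_inner_smul_left,
      real_inner_smul_right] at h
    exact h.symm
  have hortho : Orthonormal ℝ (fun i => E (a i)) := by
    rw [orthonormal_iff_ite] at ha ⊢
    intro i j
    have h := hinner i j
    rw [ha i j] at h
    have hi := (hlam i).ne'
    have hj := (hlam j).ne'
    split_ifs at h ⊢ with hij
    · subst hij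
      apply mul_left_cancel₀ (pow_ne_zero 2 hi)
      linarith
    · simpa [hi, hj] using h
  refine ⟨hortho, ?_, ?_, hLE⟩
  · exact hortho.linearIndependent.span_eq_top_of_card_eq_finrank' (by simp [hW])
  · intro k
    have hEnorm := hortho.1
    symm
    have hJ'norm : ∀ w, ‖J' w‖ = ‖w‖ := by
      intro w
      rw [norm_eq_sqrt_real_inner, hJ'orth, ← norm_eq_sqrt_real_inner]
    rw [← inner_eq_one_iff_of_norm_eq_one (𝕜 := ℝ) ((hJ'norm _).trans (hEnorm _)) (hEnorm _)]
    have h := hL (a ⟨2 * (k : ℕ), by have := k.isLt; omega⟩)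
      (a ⟨2 * (k : ℕ) + 1, by have := k.isLt; omega⟩)
    rw [hLE, hLE, map_smul, real_inner_smul_left, real_inner_smul_right, ← mul_assoc, hpair k,
      one_mul, ← haJ k, real_inner_self_eq_norm_sq, ha.1, one_pow] at h
    exact h.symm
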